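/- With the standing assumptions, the following are equivalent: (1) there exists g = {g_l}_{l<L} ⊂ ℓ²(𝕊) such that 𝒢(g,L,M,N) is an orthonormal basis for ℓ²(𝕊); (2) there exists such g making it a Riesz basis for ℓ²(𝕊); (3) card(𝒦_j) = qL for all j ∈ {0,...,M/q−1}. -/

import Mathlib

/-- The Gabor system element `e^{2πim·/M} g(· - nN)`. -/
noncomputable def gaborFn (M N : ℕ) (g : ℤ → ℂ) (m : ℕ) (n : ℤ) (j : ℤ) : ℂ :=
  Complex.exp (2 * Real.pi * Complex.I * m * j / M) * g (j - n * N)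

/-- The formal `ℓ²` inner product `⟨f, φ⟩ = Σ_j f(j) conj(φ(j))`. -/
noncomputable def ip (f φ : ℤ → ℂ) : ℂ :=
  ∑' j : ℤ, f j * (starRingEnd ℂ) (φ j)

/-- The member of the multi-window Gabor system `𝒢(g,L,M,N)` indexed by
`(m, n, l) ∈ ℕ_M × ℤ × ℕ_L`. -/
noncomputable def gaborMem (M N L : ℕ) (g : Fin L → ℤ → ℂ)
    (x : Fin M × ℤ × Fin L) : ℤ → ℂ :=
  gaborFn M N (g x.2.2) (x.1 : ℕ) x.2.1

/-- The multi-window Gabor system is complete in `ℓ²(𝕊)`. -/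
def GaborComplete (M N L : ℕ) (S : Set ℤ) (g : Fin L → ℤ → ℂ) : Prop :=
  ∀ f : lp (fun _ : ℤ => ℂ) 2, (∀ j, j ∉ S → f j = 0) →
    (∀ x : Fin M × Fin L × ℤ,
      ip (fun j => f j) (gaborMem M N L g (x.1, x.2.2, x.2.1)) = 0) → f = 0

/-- The multi-window Gabor system is an orthonormal system. -/
def GaborOrthonormal (M N L : ℕ) (g : Fin L → ℤ → ℂ) : Prop :=
  ∀ x y : Fin M × ℤ × Fin L,
    ip (gaborMem M N L g x) (gaborMem M N L g y) = if x = y then 1 else 0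

/-- The multi-window Gabor system is a Riesz sequence with bounds `A ≤ B`. -/
def GaborRieszSeq (M N L : ℕ) (g : Fin L → ℤ → ℂ) (A B : ℝ) : Prop :=
  ∀ c : (Fin M × ℤ × Fin L) →₀ ℂ,
    A * ∑ x ∈ c.support, ‖c x‖ ^ 2 ≤
      (∑' j : ℤ, ‖∑ x ∈ c.support, c x * gaborMem M N L g x j‖ ^ 2) ∧
    (∑' j : ℤ, ‖∑ x ∈ c.support, c x * gaborMem M N L g x j‖ ^ 2) ≤
      B * ∑ x ∈ c.support, ‖c x‖ ^ 2

/-- phase -/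
noncomputable def gE (M : ℕ) (m : ℕ) (j : ℤ) : ℂ :=
  Complex.exp (2 * Real.pi * Complex.I * m * j / M)

lemma gE_add (M m : ℕ) (a b : ℤ) : gE M m (a + b) = gE M m a * gE M m b := by
  unfold gE
  rw [← Complex.exp_add]
  congr 1
  push_cast
  ring

lemma gE_conj (M m : ℕ) (a : ℤ) : (starRingEnd ℂ) (gE M m a) = gE M m (-a) := by
  unfold gE
  rw [← Complex.exp_conj]
  congr 1
  have h2 : (starRingEnd ℂ) (2 : ℂ) = 2 := map_ofNat _ 2
  simp [h2]

lemma gE_zero (M m : ℕ) : gE M m 0 = 1 := by simp [gE]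

lemma gE_mul_conj (M m : ℕ) (a : ℤ) : gE M m a * (starRingEnd ℂ) (gE M m a) = 1 := by
  rw [gE_conj, ← gE_add, add_neg_cancel, gE_zero]

lemma gE_norm (M m : ℕ) (a : ℤ) : ‖gE M m a‖ = 1 := by
  have h := gE_mul_conj M m a
  rw [Complex.mul_conj'] at h
  have h2 : ‖gE M m a‖ ^ 2 = 1 := by exact_mod_cast h
  have := norm_nonneg (gE M m a)
  nlinarith

lemma gE_mulM (M m : ℕ) (hM : 0 < M) (w : ℤ) : gE M m (M * w) = 1 := by
  unfold gE
  rw [Complex.exp_eq_one_iff]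
  refine ⟨m * w, ?_⟩
  have : (M : ℂ) ≠ 0 := by exact_mod_cast hM.ne'
  push_cast
  field_simp

lemma gE_pow (M m : ℕ) (a : ℤ) : gE M m a = (gE M 1 a) ^ m := by
  unfold gE
  rw [← Complex.exp_nat_mul]
  congr 1
  push_cast
  ring

lemma gE_comm (M m t : ℕ) : gE M m t = gE M t m := by
  unfold gE
  congr 1
  push_cast
  ring

lemma gE_one_eq (M : ℕ) (hM : 0 < M) (a : ℤ) (h : gE M 1 a = 1) : (M : ℤ) ∣ a := by
  unfold gE at h
  rw [Complex.exp_eq_one_iff] at h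
  obtain ⟨n, hn⟩ := h
  refine ⟨n, ?_⟩
  have h1 : (M : ℂ) ≠ 0 := by exact_mod_cast hM.ne'
  have h2 := Complex.two_pi_I_ne_zero
  have : (2 * Real.pi * Complex.I) * (a - M * n : ℂ) = 0 := by
    field_simp at hn
    push_cast at hn
    linear_combination (2 * Real.pi * Complex.I) * hn
  have := (mul_eq_zero.mp this).resolve_left h2
  have : (a : ℂ) = M * n := by linear_combination this
  exact_mod_cast this

lemma gE_orth (M : ℕ) (hM : 0 < M) (a b : ℤ) :
    ∑ m : Fin M, gE M m a * (starRingEnd ℂ) (gE M m b) = if (M : ℤ) ∣ a - b then (M : ℂ) else 0 := by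
  have h1 : ∀ m : ℕ, gE M m a * (starRingEnd ℂ) (gE M m b) = (gE M 1 (a - b)) ^ m := by
    intro m
    rw [gE_conj, ← gE_add, ← sub_eq_add_neg, gE_pow]
  simp_rw [h1]
  rw [Fin.sum_univ_eq_sum_range (fun m => gE M 1 (a - b) ^ m)]
  split_ifs with h
  · obtain ⟨w, hw⟩ := h
    rw [hw, gE_mulM M 1 hM]
    simp
  · have hne : gE M 1 (a - b) ≠ 1 := fun h' => h (gE_one_eq M hM _ h')
    rw [geom_sum_eq hne, ← gE_pow]
    have : gE M M (a - b) = 1 := by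
      unfold gE
      rw [Complex.exp_eq_one_iff]
      refine ⟨a - b, ?_⟩
      have : (M : ℂ) ≠ 0 := by exact_mod_cast hM.ne'
      push_cast
      field_simp
    simp [this]

lemma bij_lemma (p q : ℕ) (hp : 0 < p) (hpq : Nat.Coprime p q) :
    Function.Bijective (fun x : Fin p × ℤ => ((x.1 : ℕ) : ℤ) * q + x.2 * p) := by
  have hc : IsCoprime (p : ℤ) (q : ℤ) := Nat.isCoprime_iff_coprime.mpr hpq
  have hp' : (p : ℤ) ≠ 0 := by exact_mod_cast hp.ne'
  constructor
  · rintro ⟨k, n⟩ ⟨k', n'⟩ h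
    simp only at h
    have hd : (p : ℤ) ∣ ((k : ℕ) : ℤ) - ((k' : ℕ) : ℤ) := by
      apply hc.dvd_of_dvd_mul_right
      exact ⟨n' - n, by linear_combination h⟩
    have hk : k = k' := by
      have h0 := Int.eq_zero_of_abs_lt_dvd hd (by
        have := k.2; have := k'.2
        rw [abs_lt]; constructor <;> omega)
      ext; omega
    subst hk
    simp only [Prod.mk.injEq, true_and]
    apply mul_right_cancel₀ hp'
    linear_combination h
  · intro z
    obtain ⟨u, v, huv⟩ := hc
    have h1 := Int.emod_nonneg (z * v) hp'
    have h2 := Int.emod_lt_of_pos (z * v) (by exact_mod_cast hp : (0 : ℤ) < p)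
    refine ⟨(⟨((z * v) % p).toNat, by omega⟩, z * u + ((z * v) / p) * q), ?_⟩
    simp only
    rw [Int.toNat_of_nonneg h1]
    have := Int.emod_add_mul_ediv (z * v) p
    linear_combination z * huv + q * this

section abstractPart
variable {I H : Type*} [NormedAddCommGroup H] [InnerProductSpace ℂ H] [CompleteSpace H]

def RB (v : I → H) (A B : ℝ) : Prop := ∀ c : I →₀ ℂ,
    A * ∑ x ∈ c.support, ‖c x‖ ^ 2 ≤ ‖∑ x ∈ c.support, c x • v x‖ ^ 2 ∧
    ‖∑ x ∈ c.support, c x • v x‖ ^ 2 ≤ B * ∑ x ∈ c.support, ‖c x‖ ^ 2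

lemma coord_bound (v : I → H) (A B : ℝ) (hA : 0 < A) (h : RB v A B) (c : I →₀ ℂ) (x : I) :
    ‖c x‖ ≤ (Real.sqrt A)⁻¹ * ‖Finsupp.linearCombination ℂ v c‖ := by
  have h1 := (h c).1
  have h2 : ‖c x‖ ^ 2 ≤ ∑ x ∈ c.support, ‖c x‖ ^ 2 := by
    by_cases hx : x ∈ c.support
    · exact Finset.single_le_sum (f := fun x => ‖c x‖ ^ 2) (fun _ _ => by positivity) hx
    · rw [Finsupp.notMem_support_iff.mp hx]
      simp only [norm_zero, ne_eq, OfNat.ofNat_ne_zero, not_false_eq_true, zero_pow]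
      positivity
  have h3 : Finsupp.linearCombination ℂ v c = ∑ x ∈ c.support, c x • v x := by
    rw [Finsupp.linearCombination_apply]; rfl
  rw [h3]
  have hs : 0 < Real.sqrt A := Real.sqrt_pos.mpr hA
  rw [inv_mul_eq_div, le_div_iff₀ hs]
  apply abs_le_of_sq_le_sq' _ (norm_nonneg _) |>.2
  rw [mul_pow, Real.sq_sqrt hA.le]
  nlinarith

lemma exists_dual (v : I → H) (A B : ℝ) (hA : 0 < A) (h : RB v A B) (x : I) :
    ∃ u : H, ∀ y, inner ℂ u (v y) = Finsupp.single y (1 : ℂ) x := by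
  have hli : LinearIndependent ℂ v := by
    rw [linearIndependent_iff]
    intro c hc
    ext x
    have := coord_bound v A B hA h c x
    rw [hc] at this
    simpa using this
  let φ : (Submodule.span ℂ (Set.range v)) →ₗ[ℂ] ℂ := (Finsupp.lapply x).comp hli.repr
  let φ' : StrongDual ℂ (Submodule.span ℂ (Set.range v)) := φ.mkContinuous (Real.sqrt A)⁻¹ (by
    intro w
    have := coord_bound v A B hA h (hli.repr w) x
    rw [hli.linearCombination_repr] at this
    exact this)
  obtain ⟨ψ, hψ, -⟩ := exists_extension_norm_eq _ φ'
  refine ⟨(InnerProductSpace.toDual ℂ H).symm ψ, fun y => ?_⟩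
  rw [InnerProductSpace.toDual_symm_apply]
  have hy : v y ∈ Submodule.span ℂ (Set.range v) := Submodule.subset_span ⟨y, rfl⟩
  have := hψ ⟨v y, hy⟩
  simp only at this
  rw [this]
  change hli.repr ⟨v y, hy⟩ x = _
  rw [hli.repr_eq_single y _ rfl]

lemma expansion (v u : I → H) (A B : ℝ) (hA : 0 < A) (hAB : A ≤ B) (h : RB v A B)
    (hb : ∀ x y, inner ℂ (u x) (v y) = Finsupp.single y (1 : ℂ) x) (f : H)
    (hf : f ∈ closure (Submodule.span ℂ (Set.range v) : Set H)) :
    HasSum (fun x => (inner ℂ (u x) f : ℂ) • v x) f := by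
  classical
  have hcoef : ∀ c : I →₀ ℂ, ∀ x, inner ℂ (u x) (Finsupp.linearCombination ℂ v c) = c x := by
    intro c x
    rw [Finsupp.linearCombination_apply, Finsupp.sum, inner_sum]
    simp only [inner_smul_right, hb]
    by_cases hx : x ∈ c.support
    · rw [Finset.sum_eq_single x]
      · simp
      · intro b _ hbx
        simp [hbx.symm]
      · intro h; exact absurd hx h
    · rw [Finset.sum_eq_zero, Finsupp.notMem_support_iff.mp hx]
      intro b hbm
      have : x ≠ b := fun h => hx (h ▸ hbm)
      simp [this]
  set C : ℝ := Real.sqrt (B / A) with hC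
  have hC0 : 0 ≤ C := Real.sqrt_nonneg _
  have hbd : ∀ F : Finset I, ∀ w ∈ closure (Submodule.span ℂ (Set.range v) : Set H),
      ‖∑ x ∈ F, (inner ℂ (u x) w : ℂ) • v x‖ ≤ C * ‖w‖ := by
    intro F
    have hcl : IsClosed {w : H | ‖∑ x ∈ F, (inner ℂ (u x) w : ℂ) • v x‖ ≤ C * ‖w‖} := by
      apply isClosed_le <;> fun_prop
    apply closure_minimal _ hcl
    intro w hw
    obtain ⟨c, rfl⟩ := (Finsupp.mem_span_range_iff_exists_finsupp.mp hw)
    change ‖∑ x ∈ F, (inner ℂ (u x) (Finsupp.linearCombination ℂ v c) : ℂ) • v x‖ ≤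
      C * ‖Finsupp.linearCombination ℂ v c‖
    simp only [hcoef]
    have h1 := (h (c.filter (· ∈ F))).2
    have h2 := (h c).1
    have e1 : ∑ x ∈ (c.filter (· ∈ F)).support, (c.filter (· ∈ F)) x • v x = ∑ x ∈ F, c x • v x := by
      rw [Finset.sum_subset (s₁ := (c.filter (· ∈ F)).support) (s₂ := F)]
      · apply Finset.sum_congr rfl
        intro x hx
        rw [Finsupp.filter_apply_pos _ _ hx]
      · intro x hx
        rw [Finsupp.support_filter, Finset.mem_filter] at hx
        exact hx.2
      · intro x _ hx
        rw [Finsupp.notMem_support_iff.mp hx, zero_smul]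
    have e2 : ∑ x ∈ (c.filter (· ∈ F)).support, ‖(c.filter (· ∈ F)) x‖ ^ 2 ≤
        ∑ x ∈ c.support, ‖c x‖ ^ 2 := by
      rw [Finsupp.support_filter]
      calc _ = ∑ x ∈ c.support with x ∈ F, ‖c x‖ ^ 2 := by
            apply Finset.sum_congr rfl
            intro x hx
            rw [Finsupp.filter_apply_pos _ _ (Finset.mem_filter.mp hx).2]
        _ ≤ _ := Finset.sum_le_sum_of_subset_of_nonneg (Finset.filter_subset _ _)
            (fun _ _ _ => by positivity)
    rw [e1] at h1
    have h3 : Finsupp.linearCombination ℂ v c = ∑ x ∈ c.support, c x • v x := by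
      rw [Finsupp.linearCombination_apply]; rfl
    rw [h3]
    apply abs_le_of_sq_le_sq' _ (by positivity) |>.2
    rw [mul_pow, Real.sq_sqrt (by positivity [hA.trans_le hAB])]
    rw [div_mul_eq_mul_div, le_div_iff₀ hA]
    have hB : 0 < B := hA.trans_le hAB
    nlinarith [mul_le_mul_of_nonneg_left e2 hB.le, mul_le_mul_of_nonneg_left h2 hB.le,
      mul_le_mul_of_nonneg_right h1 hA.le,
      mul_le_mul_of_nonneg_left (mul_le_mul_of_nonneg_left e2 hB.le) hA.le]
  rw [HasSum, Metric.tendsto_nhds]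
  intro ε hε
  obtain ⟨f0, hf0, hd⟩ := Metric.mem_closure_iff.mp hf (ε / (C + 1)) (by positivity)
  obtain ⟨c, hc⟩ := (Finsupp.mem_span_range_iff_exists_finsupp.mp hf0)
  change Finsupp.linearCombination ℂ v c = f0 at hc
  rw [SummationFilter.unconditional_filter]
  filter_upwards [Filter.eventually_ge_atTop c.support] with F hF
  have e0 : ∑ x ∈ F, (inner ℂ (u x) f0 : ℂ) • v x = f0 := by
    rw [← hc]
    simp only [hcoef]
    rw [Finsupp.linearCombination_apply, Finsupp.sum]
    symm
    apply Finset.sum_subset hF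
    intro x _ hx
    rw [Finsupp.notMem_support_iff.mp hx, zero_smul]
  have hm : f - f0 ∈ closure (Submodule.span ℂ (Set.range v) : Set H) := by
    have h1 : f ∈ (Submodule.span ℂ (Set.range v)).topologicalClosure := hf
    have h2 : f0 ∈ (Submodule.span ℂ (Set.range v)).topologicalClosure :=
      subset_closure hf0
    exact Submodule.sub_mem _ h1 h2
  have h4 := hbd F _ hm
  have e1 : ∑ x ∈ F, (inner ℂ (u x) f : ℂ) • v x - f
      = ∑ x ∈ F, (inner ℂ (u x) (f - f0) : ℂ) • v x - (f - f0) := by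
    simp only [inner_sub_right, sub_smul, Finset.sum_sub_distrib, e0]
    abel
  rw [dist_eq_norm, e1]
  rw [dist_eq_norm] at hd
  calc _ ≤ C * ‖f - f0‖ + ‖f - f0‖ := (norm_sub_le _ _).trans (by gcongr)
    _ = (C + 1) * ‖f - f0‖ := by ring
    _ < (C + 1) * (ε / (C + 1)) := by gcongr
    _ = ε := by field_simp

end abstractPart

noncomputable abbrev HH := lp (fun _ : ℤ => ℂ) 2

lemma gaborMem_apply (M N L : ℕ) (g : Fin L → ℤ → ℂ) (x : Fin M × ℤ × Fin L) (j : ℤ) :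
    gaborMem M N L g x j = gE M x.1 j * g x.2.2 (j - x.2.1 * N) := rfl

lemma hh_summable (f : HH) : Summable (fun j => ‖f j‖ ^ 2) := by
  have := (memℓp_gen_iff (p := 2) (by norm_num)).mp (lp.memℓp f)
  simpa using this

lemma memlp_of_summable (f : ℤ → ℂ) (h : Summable (fun j => ‖f j‖ ^ 2)) :
    Memℓp (E := fun _ : ℤ => ℂ) f 2 := by
  apply (memℓp_gen_iff (p := 2) (by norm_num)).mpr
  simpa using h

lemma hh_norm_sq (f : HH) : ‖f‖ ^ 2 = ∑' j, ‖f j‖ ^ 2 := by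
  have := lp.norm_rpow_eq_tsum (p := 2) (by norm_num) f
  simpa using this

lemma gvec_mem (M N L : ℕ) (g : Fin L → HH) (x : Fin M × ℤ × Fin L) :
    Memℓp (E := fun _ : ℤ => ℂ) (gaborMem M N L (fun l i => g l i) x) 2 := by
  apply memlp_of_summable
  simp only [gaborMem_apply, norm_mul, gE_norm, one_mul]
  exact (Equiv.subRight (x.2.1 * (N : ℤ))).summable_iff.mpr (hh_summable (g x.2.2))

noncomputable def gvec (M N L : ℕ) (g : Fin L → HH) (x : Fin M × ℤ × Fin L) : HH :=
  ⟨gaborMem M N L (fun l i => g l i) x, gvec_mem M N L g x⟩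

lemma gvec_coe (M N L : ℕ) (g : Fin L → HH) (x : Fin M × ℤ × Fin L) (j : ℤ) :
    gvec M N L g x j = gaborMem M N L (fun l i => g l i) x j := rfl

lemma gvec_apply (M N L : ℕ) (g : Fin L → HH) (x : Fin M × ℤ × Fin L) (j : ℤ) :
    gvec M N L g x j = gE M x.1 j * g x.2.2 (j - x.2.1 * N) := rfl

lemma ip_eq (f φ : HH) : ip (fun j => f j) (fun j => φ j) = inner ℂ φ f := by
  rw [lp.inner_eq_tsum]
  rfl

lemma ip_gvec (M N L : ℕ) (g : Fin L → HH) (x : Fin M × ℤ × Fin L) (f : HH) :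
    ip (fun j => f j) (gaborMem M N L (fun l i => g l i) x) = inner ℂ (gvec M N L g x) f :=
  ip_eq f (gvec M N L g x)

lemma orthonormal_iff (M N L : ℕ) (g : Fin L → HH) :
    GaborOrthonormal M N L (fun l i => g l i) ↔ Orthonormal ℂ (gvec M N L g) := by
  classical
  rw [orthonormal_iff_ite]
  constructor
  · intro h x y
    rw [← ip_gvec]
    refine (h y x).trans ?_
    simp [eq_comm]
  · intro h x y
    refine (ip_gvec M N L g y (gvec M N L g x)).trans ?_
    rw [h]
    simp [eq_comm]

lemma hh_sum_apply {I : Type*} (F : Finset I) (v : I → HH) (j : ℤ) :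
    (∑ x ∈ F, v x : HH) j = ∑ x ∈ F, v x j := by
  rw [lp.coeFn_sum, Finset.sum_apply]

lemma norm_comb (M N L : ℕ) (g : Fin L → HH) (c : (Fin M × ℤ × Fin L) →₀ ℂ) :
    (∑' j : ℤ, ‖∑ x ∈ c.support, c x * gaborMem M N L (fun l i => g l i) x j‖ ^ 2)
      = ‖∑ x ∈ c.support, c x • gvec M N L g x‖ ^ 2 := by
  rw [hh_norm_sq]
  congr 1
  ext j
  rw [hh_sum_apply]
  rfl

lemma riesz_iff (M N L : ℕ) (g : Fin L → HH) (A B : ℝ) :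
    GaborRieszSeq M N L (fun l i => g l i) A B ↔ RB (gvec M N L g) A B := by
  unfold GaborRieszSeq RB
  simp only [norm_comb]

lemma riesz_of_orthonormal (M N L : ℕ) (g : Fin L → HH)
    (h : GaborOrthonormal M N L (fun l i => g l i)) :
    GaborRieszSeq M N L (fun l i => g l i) 1 1 := by
  rw [riesz_iff]
  rw [orthonormal_iff] at h
  intro c
  have : ‖∑ x ∈ c.support, c x • gvec M N L g x‖ ^ 2 = ∑ x ∈ c.support, ‖c x‖ ^ 2 := by
    have h1 := h.inner_sum c c c.support
    rw [inner_self_eq_norm_sq_to_K] at h1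
    simp only [RCLike.conj_mul] at h1
    exact_mod_cast h1
  rw [this]
  simp

lemma mem_closure_span (M N L : ℕ) (S : Set ℤ) (g : Fin L → HH)
    (hper : ∀ j ∈ S, ∀ n : ℤ, j + n * N ∈ S)
    (hg : ∀ l, ∀ j, j ∉ S → g l j = 0)
    (hc : GaborComplete M N L S (fun l i => g l i)) (f : HH) (hf : ∀ j, j ∉ S → f j = 0) :
    f ∈ closure (Submodule.span ℂ (Set.range (gvec M N L g)) : Set HH) := by
  set K := (Submodule.span ℂ (Set.range (gvec M N L g))).topologicalClosure with hK
  have hKc : IsClosed (K : Set HH) := Submodule.isClosed_topologicalClosure _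
  haveI : CompleteSpace K := hKc.completeSpace_coe
  change f ∈ K
  have hgS : ∀ x, ∀ j, j ∉ S → gvec M N L g x j = 0 := by
    intro x j hj
    rw [gvec_apply, hg, mul_zero]
    intro h
    apply hj
    have := hper _ h x.2.1
    simpa using this
  have hKS : ∀ w ∈ K, ∀ j, j ∉ S → w j = 0 := by
    intro w hw j hj
    have : K ≤ LinearMap.ker (lp.evalCLM ℂ (fun _ : ℤ => ℂ) 2 j).toLinearMap := by
      apply Submodule.topologicalClosure_minimal
      · rw [Submodule.span_le]
        rintro _ ⟨x, rfl⟩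
        exact hgS x j hj
      · exact (lp.evalCLM ℂ (fun _ : ℤ => ℂ) 2 j).isClosed_ker
    exact this hw
  have h0 : f - K.starProjection f = 0 := by
    apply hc
    · intro j hj
      rw [lp.coeFn_sub, Pi.sub_apply, hf j hj, hKS _ (Submodule.starProjection_apply_mem K f) j hj,
        sub_zero]
    · intro x
      rw [ip_gvec]
      have := Submodule.sub_starProjection_mem_orthogonal (K := K) f
      rw [Submodule.mem_orthogonal] at this
      apply this
      exact Submodule.le_topologicalClosure _ (Submodule.subset_span ⟨_, rfl⟩)
  rw [sub_eq_zero.mp h0]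
  exact Submodule.starProjection_apply_mem K f

/-- inner products under time-frequency shifts -/
lemma inner_shift (M N L : ℕ) (u g : Fin L → HH) (x y : Fin M × ℤ × Fin L) :
    inner ℂ (gvec M N L u x) (gvec M N L g y) =
      ∑' j : ℤ, gE M y.1 j * (starRingEnd ℂ) (gE M x.1 j) * 
        (g y.2.2 (j - y.2.1 * N) * (starRingEnd ℂ) (u x.2.2 (j - x.2.1 * N))) := by
  rw [lp.inner_eq_tsum]
  congr 1
  ext j
  rw [gvec_apply, gvec_apply]
  simp only [RCLike.inner_apply, map_mul]
  ring

lemma gE_mod (M m : ℕ) (hM : 0 < M) (a b : ℤ) (h : (M : ℤ) ∣ a - b) : gE M m a = gE M m b := by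
  obtain ⟨w, hw⟩ := h
  have : a = b + M * w := by linarith
  rw [this, gE_add, gE_mulM M m hM, mul_one]

lemma gE_mod_left (M m m' : ℕ) (hM : 0 < M) (a : ℤ) (h : (M : ℤ) ∣ m - m') :
    gE M m a = gE M m' a := by
  obtain ⟨w, hw⟩ := h
  unfold gE
  rw [Complex.exp_eq_exp_iff_exists_int]
  refine ⟨w * a, ?_⟩
  have h1 : (M : ℂ) ≠ 0 := by exact_mod_cast hM.ne'
  have h2 : (m : ℂ) = m' + M * w := by
    have : (m : ℤ) = m' + M * w := by linarith
    exact_mod_cast this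
  rw [h2]
  push_cast
  field_simp

/-- the shifted duals are biorthogonal -/
lemma biorth (M N L : ℕ) (hM : 0 < M) (u g : Fin L → HH)
    (hu : ∀ l y, inner ℂ (u l) (gvec M N L g y) =
      Finsupp.single y (1 : ℂ) ((⟨0, hM⟩, 0, l) : Fin M × ℤ × Fin L))
    (x y : Fin M × ℤ × Fin L) :
    inner ℂ (gvec M N L u x) (gvec M N L g y) = Finsupp.single y (1 : ℂ) x := by
  classical
  -- compare with the unshifted one
  obtain ⟨m, n, l⟩ := x
  obtain ⟨m', n', l'⟩ := y
  let m'' : Fin M := ⟨(m' + (M - m)) % M, Nat.mod_lt _ hM⟩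
  have hm'' : ∀ a, gE M m'' a = gE M m' a * (starRingEnd ℂ) (gE M m a) := by
    intro a
    have h1 : gE M m'' a = gE M (m' + (M - m)) a := by
      apply gE_mod_left M _ _ hM
      simp only [m'']
      have := Int.emod_add_mul_ediv ((m' : ℤ) + ((M : ℤ) - m)) M
      have hle := m.2.le
      push_cast [hle]
      exact ⟨-(((m' : ℤ) + ((M : ℤ) - m)) / M), by linear_combination this⟩
    have h2 : gE M (m' + (M - m)) a * gE M m a = gE M m' a := by
      rw [gE_pow, gE_pow M m, gE_pow M m', ← pow_add]
      have : (m' : ℕ) + (M - m) + m = m' + M := by have := m.2; omega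
      rw [this, pow_add, ← gE_pow M M]
      have h3 : gE M M a = 1 := by
        have h4 := gE_mod_left M M 0 hM a ⟨1, by simp⟩
        rw [h4]; simp [gE]
      rw [h3, mul_one]
    rw [h1, ← h2, mul_assoc, gE_mul_conj, mul_one]
  have key := hu l (m'', n' - n, l')
  rw [lp.inner_eq_tsum] at key
  have e : inner ℂ (gvec M N L u (m, n, l)) (gvec M N L g (m', n', l')) =
      gE M m'' (n * N) * ∑' j : ℤ, inner ℂ (u l j) (gvec M N L g (m'', n' - n, l') j) := by
    rw [inner_shift, ← tsum_mul_left, ← (Equiv.addRight (n * (N : ℤ))).tsum_eq]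
    congr 1
    ext j
    simp only [Equiv.coe_addRight, gvec_apply, RCLike.inner_apply, ← hm'']
    rw [gE_add]
    have h1 : j + n * (N : ℤ) - n' * N = j - (n' - n) * N := by ring
    have h2 : j + n * (N : ℤ) - n * N = j := by ring
    rw [h1, h2]
    ring
  rw [e, key]
  simp only [Finsupp.single_apply, Prod.mk.injEq]
  have hmm : m'' = ⟨0, hM⟩ ↔ m' = m := by
    simp only [m'', Fin.ext_iff]
    have h1 := m.2
    have h2 := m'.2
    constructor
    · intro h
      have hd := Nat.dvd_of_mod_eq_zero h
      obtain ⟨w, hw⟩ := hd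
      have : w = 1 := by
        have : w < 2 := by
          by_contra hcon
          have : M * 2 ≤ M * w := Nat.mul_le_mul_left M (by omega)
          omega
        have : w ≠ 0 := by rintro rfl; omega
        omega
      subst this
      omega
    · intro h
      rw [h]
      have : (m : ℕ) + (M - m) = M := by omega
      rw [this, Nat.mod_self]
  by_cases hc : m' = m ∧ n' = n ∧ l' = l
  · obtain ⟨rfl, rfl, rfl⟩ := hc
    simp only [hmm, sub_self, and_self, if_true, mul_one]
    rw [hm'', gE_mul_conj]
  · rw [if_neg hc, if_neg, mul_zero]
    rw [hmm, sub_eq_zero]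
    exact hc

lemma prod_summable (g u : HH) : Summable (fun j : ℤ => g j * (starRingEnd ℂ) (u j)) :=
  lp.summable_inner (𝕜 := ℂ) u g

lemma sum_modM (M N L : ℕ) (hM : 0 < M) (u g : Fin L → HH)
    (hu : ∀ l y, inner ℂ (u l) (gvec M N L g y) =
      Finsupp.single y (1 : ℂ) ((⟨0, hM⟩, 0, l) : Fin M × ℤ × Fin L))
    (l : Fin L) (r : ℤ) :
    (M : ℂ) * ∑' w : ℤ, g l (r + w * M) * (starRingEnd ℂ) (u l (r + w * M)) = 1 := by
  classical
  have h1 : ∀ m : Fin M, ∑' j : ℤ, gE M m j * (g l j * (starRingEnd ℂ) (u l j)) =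
      if m = ⟨0, hM⟩ then 1 else 0 := by
    intro m
    have := hu l (m, 0, l)
    rw [lp.inner_eq_tsum] at this
    simp only [gvec_apply, RCLike.inner_apply, Finsupp.single_apply, Prod.mk.injEq, and_true,
      zero_mul, sub_zero] at this
    rw [← this]
    congr 1
    ext j
    ring
  have hs : ∀ m : Fin M, Summable (fun j : ℤ => (starRingEnd ℂ) (gE M m r) *
      (gE M m j * (g l j * (starRingEnd ℂ) (u l j)))) := by
    intro m
    apply Summable.mul_left
    apply Summable.of_norm
    simp only [norm_mul (gE _ _ _), gE_norm, one_mul]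
    exact (prod_summable (g l) (u l)).norm
  have h2 : ∑ m : Fin M, (starRingEnd ℂ) (gE M m r) *
      ∑' j : ℤ, gE M m j * (g l j * (starRingEnd ℂ) (u l j)) = 1 := by
    simp_rw [h1]
    simp [gE]
  simp_rw [← tsum_mul_left] at h2
  rw [← Summable.tsum_finsetSum (fun m _ => hs m)] at h2
  have h3 : ∀ j : ℤ, ∑ m : Fin M, (starRingEnd ℂ) (gE M m r) *
      (gE M m j * (g l j * (starRingEnd ℂ) (u l j))) =
      if (M : ℤ) ∣ j - r then (M : ℂ) * (g l j * (starRingEnd ℂ) (u l j)) else 0 := by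
    intro j
    have := gE_orth M hM j r
    calc _ = (∑ m : Fin M, gE M m j * (starRingEnd ℂ) (gE M m r)) *
        (g l j * (starRingEnd ℂ) (u l j)) := by
          rw [Finset.sum_mul]
          apply Finset.sum_congr rfl
          intro m _
          ring
      _ = _ := by rw [this]; split_ifs <;> simp
  simp_rw [h3] at h2
  have hinj : Function.Injective (fun w : ℤ => r + w * (M : ℤ)) := by
    intro a b hab
    have hM' : (M : ℤ) ≠ 0 := by exact_mod_cast hM.ne'
    apply mul_right_cancel₀ hM'
    simpa using hab
  rw [← hinj.tsum_eq] at h2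
  · rw [← tsum_mul_left, ← h2]
    congr 1
    ext w
    rw [if_pos]
    exact ⟨w, by ring⟩
  · intro j hj
    rw [Function.mem_support] at hj
    have : (M : ℤ) ∣ j - r := by
      by_contra hcon
      exact hj (if_neg hcon)
    obtain ⟨w, hw⟩ := this
    exact ⟨w, by simp only; linear_combination -hw⟩

lemma sum_modN (M N L : ℕ) (hM : 0 < M) (hN : 0 < N) (u g : Fin L → HH) (A B : ℝ) (hA : 0 < A) (hAB : A ≤ B)
    (hR : RB (gvec M N L g) A B)
    (hu : ∀ l y, inner ℂ (u l) (gvec M N L g y) =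
      Finsupp.single y (1 : ℂ) ((⟨0, hM⟩, 0, l) : Fin M × ℤ × Fin L))
    (S : Set ℤ)
    (hper : ∀ j ∈ S, ∀ n : ℤ, j + n * N ∈ S)
    (hg : ∀ l, ∀ j, j ∉ S → g l j = 0)
    (hc : GaborComplete M N L S (fun l i => g l i)) (j : ℤ) (hj : j ∈ S) :
    (M : ℂ) * ∑' n : ℤ, ∑ l, g l (j + n * N) * (starRingEnd ℂ) (u l (j + n * N)) = 1 := by
  classical
  set f : HH := lp.single 2 j (1 : ℂ) with hf
  have hfS : ∀ i, i ∉ S → f i = 0 := by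
    intro i hi
    rw [hf, lp.single_apply_ne]
    rintro rfl
    exact hi hj
  have hcl := mem_closure_span M N L S g hper hg hc f hfS
  have hexp := expansion (gvec M N L g) (gvec M N L u) A B hA hAB hR (biorth M N L hM u g hu) f hcl
  have hev := (lp.evalCLM ℂ (fun _ : ℤ => ℂ) 2 j).hasSum hexp
  have e1 : ∀ x : Fin M × ℤ × Fin L, (lp.evalCLM ℂ (fun _ : ℤ => ℂ) 2 j)
      ((inner ℂ (gvec M N L u x) f : ℂ) • gvec M N L g x) =
      g x.2.2 (j - x.2.1 * N) * (starRingEnd ℂ) (u x.2.2 (j - x.2.1 * N)) := by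
    intro x
    change (inner ℂ (gvec M N L u x) f : ℂ) * gvec M N L g x j = _
    rw [hf, lp.inner_single_right]
    simp only [gvec_apply, RCLike.inner_apply, map_mul, one_mul]
    linear_combination (g x.2.2 (j - x.2.1 * N) * (starRingEnd ℂ) (u x.2.2 (j - x.2.1 * N))) *
      gE_mul_conj M x.1 j
  have e2 : (lp.evalCLM ℂ (fun _ : ℤ => ℂ) 2 j) f = 1 := by
    change f j = 1
    rw [hf, lp.single_apply_self]
  rw [e2] at hev
  replace hev : HasSum (fun x : Fin M × ℤ × Fin L =>
    g x.2.2 (j - x.2.1 * N) * (starRingEnd ℂ) (u x.2.2 (j - x.2.1 * N))) 1 := by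
    have h9 := funext e1
    rw [h9] at hev
    exact hev
  have t1 := hev.tsum_eq
  rw [hev.summable.tsum_prod] at t1
  simp only [tsum_fintype, Finset.sum_const, Finset.card_univ, Fintype.card_fin, nsmul_eq_mul] at t1
  rw [← t1]
  congr 1
  have hs2 : Summable (fun x : ℤ × Fin L =>
    g x.2 (j - x.1 * N) * (starRingEnd ℂ) (u x.2 (j - x.1 * N))) :=
      hev.summable.prod_factor (⟨0, hM⟩ : Fin M)
  rw [hs2.tsum_prod, ← (Equiv.neg ℤ).tsum_eq]
  congr 1
  ext n
  rw [tsum_fintype]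
  simp only [Equiv.neg_apply]
  apply Finset.sum_congr rfl
  intro l _
  have : j + -n * (N : ℤ) = j - n * N := by ring
  rw [this]

lemma sum_split (p q : ℕ) (hp : 0 < p) (hpq : Nat.Coprime p q) (F : ℤ → ℂ) (hF : Summable F) :
    ∑' z, F z = ∑ k : Fin p, ∑' n : ℤ, F (((k : ℕ) : ℤ) * q + n * p) := by
  have hb := bij_lemma p q hp hpq
  have hs : Summable (fun x : Fin p × ℤ => F (((x.1 : ℕ) : ℤ) * q + x.2 * p)) :=
    hF.comp_injective hb.1
  rw [← tsum_fintype (L := SummationFilter.unconditional _), ← hs.tsum_prod]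
  exact ((Equiv.ofBijective _ hb).tsum_eq F).symm

lemma necessity (M N p q L : ℕ) (hM : 0 < M) (hN : 0 < N) (hp : 0 < p) (hq : 0 < q)
    (hpq : Nat.Coprime p q) (hMN : q * N = p * M)
    (S : Set ℤ) (hper : ∀ j ∈ S, ∀ n : ℤ, j + n * N ∈ S)
    (g : Fin L → HH) (hg : ∀ l, ∀ j, j ∉ S → g l j = 0) (A B : ℝ) (hA : 0 < A) (hAB : A ≤ B)
    (hR : GaborRieszSeq M N L (fun l i => g l i) A B)
    (hc : GaborComplete M N L S (fun l i => g l i)) (r : ℤ) :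
    Nat.card {k : Fin p // r + (k : ℕ) * (M : ℤ) ∈ S} = q * L := by
  classical
  rw [riesz_iff] at hR
  have hM' : (M : ℂ) ≠ 0 := by exact_mod_cast hM.ne'
  have hdu : ∀ l : Fin L, ∃ u : HH, ∀ y, inner ℂ u (gvec M N L g y) =
      Finsupp.single y (1 : ℂ) ((⟨0, hM⟩, 0, l) : Fin M × ℤ × Fin L) :=
    fun l => exists_dual _ A B hA hR _
  choose u hu using hdu
  set d : ℕ := M / q with hd
  have hqd : q ∣ M := by
    apply (hpq.symm).dvd_of_dvd_mul_left
    exact ⟨N, hMN.symm⟩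
  have hMd : M = q * d := (Nat.mul_div_cancel' hqd).symm
  have hNd : N = p * d := by
    apply Nat.eq_of_mul_eq_mul_left hq
    rw [hMN, hMd]; ring
  have hd0 : (d : ℤ) ≠ 0 := by
    intro h
    have : d = 0 := by exact_mod_cast h
    rw [this] at hMd; omega
  set h : ℤ → ℂ := fun j => ∑ l, g l j * (starRingEnd ℂ) (u l j) with hh
  have hsum : Summable h := summable_sum (fun l _ => prod_summable (g l) (u l))
  have hinj : Function.Injective (fun z : ℤ => r + z * (d : ℤ)) := by
    intro a b hab
    apply mul_right_cancel₀ hd0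
    simpa using hab
  have hsumz : Summable (fun z : ℤ => h (r + z * d)) := hsum.comp_injective hinj
  -- first computation
  have c1 : (M : ℂ) * ∑' z : ℤ, h (r + z * d) = q * L := by
    rw [sum_split q 1 hq (Nat.coprime_one_right q) _ hsumz, Finset.mul_sum]
    have : ∀ s : Fin q, (M : ℂ) * ∑' w : ℤ, h (r + (((s : ℕ) : ℤ) * (1 : ℕ) + w * q) * d) = L := by
      intro s
      have hs : ∀ w, h (r + (((s : ℕ) : ℤ) * (1 : ℕ) + w * q) * d) = ∑ l, g l ((r + (s : ℕ) * d) + w * M) *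
          (starRingEnd ℂ) (u l ((r + (s : ℕ) * d) + w * M)) := by
        intro w
        have : r + (((s : ℕ) : ℤ) * (1 : ℕ) + w * q) * d = (r + (s : ℕ) * d) + w * M := by
          rw [hMd]
          push_cast
          ring
        rw [this]
      simp_rw [hs]
      rw [Summable.tsum_finsetSum, Finset.mul_sum]
      · simp [sum_modM M N L hM u g hu]
      · intro l _
        apply (prod_summable (g l) (u l)).comp_injective
          (i := fun w : ℤ => (r + (s : ℕ) * d) + w * (M : ℤ))
        intro a b hab
        have hM' : (M : ℤ) ≠ 0 := by exact_mod_cast hM.ne'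
        apply mul_right_cancel₀ hM'
        simpa using hab
    simp_rw [this]
    simp
  have c2 : (M : ℂ) * ∑' z : ℤ, h (r + z * d) =
      Nat.card {k : Fin p // r + (k : ℕ) * (M : ℤ) ∈ S} := by
    rw [sum_split p q hp hpq _ hsumz, Finset.mul_sum]
    have : ∀ k : Fin p, (M : ℂ) * ∑' n : ℤ, h (r + (((k : ℕ) : ℤ) * q + n * p) * d) =
        if r + (k : ℕ) * (M : ℤ) ∈ S then 1 else 0 := by
      intro k
      have hs : ∀ n, h (r + (((k : ℕ) : ℤ) * q + n * p) * d) = ∑ l, g l ((r + (k : ℕ) * M) + n * N) *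
          (starRingEnd ℂ) (u l ((r + (k : ℕ) * M) + n * N)) := by
        intro n
        have : r + (((k : ℕ) : ℤ) * q + n * p) * d = (r + (k : ℕ) * M) + n * N := by
          rw [hMd, hNd]
          push_cast
          ring
        rw [this]
      simp_rw [hs]
      split_ifs with hk
      · exact sum_modN M N L hM hN u g A B hA hAB hR hu S hper hg hc _ hk
      · have : ∀ n : ℤ, (r + (k : ℕ) * (M : ℤ)) + n * N ∉ S := by
          intro n hn
          apply hk
          have := hper _ hn (-n)
          simpa using this
        simp [hg _ _ (this _)]
    simp_rw [this]
    rw [Nat.card_eq_fintype_card, Fintype.card_subtype]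
    simp
  rw [c1] at c2
  exact_mod_cast c2.symm

lemma tiling (M N p q L : ℕ) (hM : 0 < M) (hN : 0 < N) (hp : 0 < p) (hq : 0 < q)
    (hpq : Nat.Coprime p q) (hMN : q * N = p * M)
    (S : Set ℤ) (hper : ∀ j ∈ S, ∀ n : ℤ, j + n * N ∈ S)
    (hcard : ∀ j : ℤ, 0 ≤ j → j < ((M / q : ℕ) : ℤ) →
        Nat.card {k : Fin p // j + (k : ℕ) * (M : ℤ) ∈ S} = q * L) :
    ∃ a : Fin L → Fin M → ℤ, (∀ l t, (M : ℤ) ∣ a l t - (t : ℕ)) ∧ (∀ l t, a l t ∈ S) ∧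
      (∀ j ∈ S, ∃ l t, ∃ n : ℤ, j = a l t + n * N) ∧
      (∀ l t l' t', ∀ n : ℤ, a l t = a l' t' + n * N → l = l' ∧ t = t') := by
  classical
  set d : ℕ := M / q with hd
  have hqd : q ∣ M := by
    apply (hpq.symm).dvd_of_dvd_mul_left
    exact ⟨N, hMN.symm⟩
  have hMd : M = q * d := (Nat.mul_div_cancel' hqd).symm
  have hNd : N = p * d := by
    apply Nat.eq_of_mul_eq_mul_left hq
    rw [hMN, hMd]; ring
  have hd1 : 0 < d := by
    rcases Nat.eq_zero_or_pos d with h | h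
    · rw [h] at hMd; omega
    · exact h
  have hd0 : (d : ℤ) ≠ 0 := by exact_mod_cast hd1.ne'
  have hMdz : (M : ℤ) = q * d := by exact_mod_cast hMd
  have hNdz : (N : ℤ) = p * d := by exact_mod_cast hNd
  have hκ : ∀ r : Fin d, ∃ κ : Fin q × Fin L → Fin p, Function.Injective κ ∧
      (∀ y, ((r : ℕ) : ℤ) + (κ y : ℕ) * (M : ℤ) ∈ S) ∧
      (∀ k : Fin p, ((r : ℕ) : ℤ) + (k : ℕ) * (M : ℤ) ∈ S → ∃ y, κ y = k) := by
    intro r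
    have h1 := hcard (r : ℕ) (by positivity) (by exact_mod_cast r.2)
    have e : {k : Fin p // ((r : ℕ) : ℤ) + (k : ℕ) * (M : ℤ) ∈ S} ≃ Fin q × Fin L :=
      Fintype.equivOfCardEq (by rw [← Nat.card_eq_fintype_card, h1]; simp)
    refine ⟨fun y => (e.symm y).1, ?_, fun y => (e.symm y).2, ?_⟩
    · exact Subtype.val_injective.comp e.symm.injective
    · intro k hk
      exact ⟨e ⟨k, hk⟩, by simp⟩
  choose κ κinj κmem κsurj using hκ
  let R : Fin M → Fin d := fun t => ⟨t % d, Nat.mod_lt _ hd1⟩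
  let σ : Fin M → Fin q := fun t => ⟨t / d, by
    rw [Nat.div_lt_iff_lt_mul hd1, ← hMd]; exact t.2⟩
  have hRσ : ∀ t : Fin M, ((t : ℕ) : ℤ) = (R t : ℕ) + (σ t : ℕ) * (d : ℤ) := by
    intro t
    have := Nat.mod_add_div t d
    simp only [R, σ]
    have h2 : ((t : ℕ) : ℤ) = ((t : ℕ) % d + d * ((t : ℕ) / d) : ℕ) := by rw [this]
    rw [h2]
    push_cast
    ring
  have hc : IsCoprime (p : ℤ) (q : ℤ) := Nat.isCoprime_iff_coprime.mpr hpq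
  obtain ⟨u, v, huv⟩ := hc
  have hex : ∀ (l : Fin L) (t : Fin M), ∃ x b : ℤ, (M : ℤ) ∣ x - (t : ℕ) ∧
      x = (R t : ℕ) + (κ (R t) (σ t, l) : ℕ) * (M : ℤ) + b * N := by
    intro l t
    set k : ℤ := ((κ (R t) (σ t, l) : ℕ) : ℤ)
    set s : ℤ := ((σ t : ℕ) : ℤ) with hs
    refine ⟨_, (s - k * q) * u, ?_, rfl⟩
    refine ⟨-(s - k * q) * v, ?_⟩
    rw [hRσ t, hMdz, hNdz]
    linear_combination (s - k * q) * d * huv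
  choose a b ha hab using hex
  have hinj := (bij_lemma p q hp hpq).1
  refine ⟨a, ha, ?_, ?_, ?_⟩
  · intro l t
    rw [hab]
    exact hper _ (κmem _ _) _
  · intro j hj
    have h1 := Int.emod_nonneg j hd0
    have h2 := Int.emod_lt_of_pos j (by exact_mod_cast hd1 : (0 : ℤ) < d)
    have h3 := Int.emod_add_mul_ediv j d
    obtain ⟨⟨k, n⟩, hkn⟩ := (bij_lemma p q hp hpq).2 (j / d)
    simp only at hkn
    let r : Fin d := ⟨(j % d).toNat, by omega⟩
    have hr : ((r : ℕ) : ℤ) = j % d := Int.toNat_of_nonneg h1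
    have hj' : j = (r : ℕ) + (k : ℕ) * (M : ℤ) + n * N := by
      rw [hr, hMdz, hNdz]
      linear_combination -h3 - d * hkn
    have hk : ((r : ℕ) : ℤ) + (k : ℕ) * (M : ℤ) ∈ S := by
      have := hper _ hj (-n)
      rw [hj'] at this
      simpa using this
    obtain ⟨⟨s, l⟩, hy⟩ := κsurj r k hk
    let t : Fin M := ⟨r + s * d, by
      have h4 := r.2
      have h5 := s.2
      have h6 : ((s : ℕ) + 1) * d ≤ q * d := Nat.mul_le_mul_right d h5
      rw [← hMd] at h6
      nlinarith⟩
    have hRt : R t = r := by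
      ext
      simp only [R, t]
      rw [Nat.add_mul_mod_self_right, Nat.mod_eq_of_lt r.2]
    have hσt : σ t = s := by
      ext
      simp only [σ, t]
      rw [Nat.add_mul_div_right _ _ hd1, Nat.div_eq_of_lt r.2, zero_add]
    refine ⟨l, t, n - b l t, ?_⟩
    rw [hab l t, hRt, hσt, hy, hj']
    ring
  · intro l t l' t' n h
    have hRR : R t = R t' := by
      have h1 := ha l t
      have h2 := ha l' t'
      obtain ⟨w, hw⟩ := h1
      obtain ⟨w', hw'⟩ := h2
      have h3 : (d : ℤ) ∣ ((R t : ℕ) : ℤ) - ((R t' : ℕ) : ℤ) := by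
        refine ⟨(σ t' : ℕ) - (σ t : ℕ) + q * w' - q * w + n * p, ?_⟩
        have e1 := hRσ t
        have e2 := hRσ t'
        rw [hMdz] at hw hw'
        rw [hNdz] at h
        linear_combination -e1 + e2 - hw + hw' + h
      have h0 := Int.eq_zero_of_abs_lt_dvd h3 (by
        have := (R t).2; have := (R t').2
        rw [abs_lt]; constructor <;> omega)
      ext; omega
    have h4 := hab l t
    have h5 := hab l' t'
    rw [← hRR] at h5
    have h6 : (⟨κ (R t) (σ t, l), b l t⟩ : Fin p × ℤ) = ⟨κ (R t) (σ t', l'), b l' t' + n⟩ := by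
      apply hinj
      simp only
      apply mul_right_cancel₀ hd0
      rw [h4, h5] at h
      rw [hMdz, hNdz] at h
      linear_combination h
    have h7 := κinj (R t) (congrArg Prod.fst h6)
    simp only [Prod.mk.injEq] at h7
    refine ⟨h7.2, ?_⟩
    have e1 := hRσ t
    have e2 := hRσ t'
    rw [hRR, h7.1, ← e2] at e1
    ext
    exact_mod_cast e1

section constr
variable (M N L : ℕ) (a : Fin L → Fin M → ℤ)

noncomputable def gcon (l : Fin L) : HH :=
  ∑ t : Fin M, lp.single 2 (a l t) (((Real.sqrt M)⁻¹ : ℝ) : ℂ)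

lemma gcon_apply (l : Fin L) (j : ℤ) :
    gcon M L a l j = ∑ t : Fin M, if j = a l t then (((Real.sqrt M)⁻¹ : ℝ) : ℂ) else 0 := by
  rw [gcon, hh_sum_apply]
  apply Finset.sum_congr rfl
  intro t _
  split_ifs with h
  · rw [h, lp.single_apply_self]
  · rw [lp.single_apply_ne]
    exact h

lemma gvec_gcon (x : Fin M × ℤ × Fin L) : gvec M N L (gcon M L a) x =
    ∑ t : Fin M, lp.single 2 (a x.2.2 t + x.2.1 * N)
      (gE M x.1 (a x.2.2 t + x.2.1 * N) * (((Real.sqrt M)⁻¹ : ℝ) : ℂ)) := by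
  ext j
  rw [gvec_apply, hh_sum_apply, gcon_apply, Finset.mul_sum]
  apply Finset.sum_congr rfl
  intro t _
  split_ifs with h
  · have : j = a x.2.2 t + x.2.1 * N := by linarith
    rw [this, lp.single_apply_self]
  · rw [lp.single_apply_ne, mul_zero]
    intro h'
    apply h
    linarith

lemma inner_gcon (x : Fin M × ℤ × Fin L) (f : HH) :
    inner ℂ (gvec M N L (gcon M L a) x) f =
    ∑ t : Fin M, (((Real.sqrt M)⁻¹ : ℝ) : ℂ) * (f (a x.2.2 t + x.2.1 * N) * 
      (starRingEnd ℂ) (gE M x.1 (a x.2.2 t + x.2.1 * N))) := by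
  rw [gvec_gcon, sum_inner]
  apply Finset.sum_congr rfl
  intro t _
  rw [lp.inner_single_left]
  simp only [RCLike.inner_apply, map_mul, Complex.conj_ofReal]
  ring

end constr

lemma sufficiency (M N p q L : ℕ) (hM : 0 < M) (hN : 0 < N) (hp : 0 < p) (hq : 0 < q)
    (hpq : Nat.Coprime p q) (hMN : q * N = p * M)
    (S : Set ℤ) (hper : ∀ j ∈ S, ∀ n : ℤ, j + n * N ∈ S)
    (hcard : ∀ j : ℤ, 0 ≤ j → j < ((M / q : ℕ) : ℤ) →
        Nat.card {k : Fin p // j + (k : ℕ) * (M : ℤ) ∈ S} = q * L) :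
    ∃ g : Fin L → lp (fun _ : ℤ => ℂ) 2, (∀ l, ∀ j, j ∉ S → g l j = 0) ∧
        GaborOrthonormal M N L (fun l i => g l i) ∧
        GaborComplete M N L S (fun l i => g l i) := by
  classical
  obtain ⟨a, ha, haS, hcov, hinj⟩ := tiling M N p q L hM hN hp hq hpq hMN S hper hcard
  have hN0 : (N : ℤ) ≠ 0 := by exact_mod_cast hN.ne'
  have hM0 : (M : ℂ) ≠ 0 := by exact_mod_cast hM.ne'
  have hsq : ((((Real.sqrt M)⁻¹ : ℝ) : ℂ)) * (((Real.sqrt M)⁻¹ : ℝ) : ℂ) = (M : ℂ)⁻¹ := by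
    rw [← Complex.ofReal_mul, ← mul_inv, Real.mul_self_sqrt (by positivity)]
    simp
  have hsq0 : ((((Real.sqrt M)⁻¹ : ℝ) : ℂ)) ≠ 0 := by
    intro h
    rw [h, mul_zero] at hsq
    exact hM0 (inv_eq_zero.mp hsq.symm)
  refine ⟨gcon M L a, ?_, ?_, ?_⟩
  · intro l j hj
    rw [gcon_apply]
    apply Finset.sum_eq_zero
    intro t _
    rw [if_neg]
    rintro rfl
    exact hj (haS l t)
  · rw [orthonormal_iff, orthonormal_iff_ite]
    rintro ⟨m, n, l⟩ ⟨m', n', l'⟩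
    rw [inner_gcon]
    simp only [gvec_apply]
    have hval : ∀ t, gcon M L a l' (a l t + n * N - n' * N) =
        if n = n' ∧ l = l' then (((Real.sqrt M)⁻¹ : ℝ) : ℂ) else 0 := by
      intro t
      rw [gcon_apply]
      split_ifs with h
      · obtain ⟨rfl, rfl⟩ := h
        rw [Finset.sum_eq_single t]
        · simp
        · intro b _ hb
          rw [if_neg]
          intro h
          apply hb
          exact (hinj l t l b 0 (by linarith)).2.symm
        · simp
      · apply Finset.sum_eq_zero
        intro t' _
        rw [if_neg]
        intro h'
        obtain ⟨h1, h2⟩ := hinj l t l' t' (n' - n) (by linarith)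
        subst h1 h2
        apply h
        refine ⟨?_, rfl⟩
        apply mul_right_cancel₀ hN0
        linarith
    simp_rw [hval]
    by_cases h : n = n' ∧ l = l'
    · obtain ⟨rfl, rfl⟩ := h
      have e1 : ∀ t : Fin M, (((Real.sqrt M)⁻¹ : ℝ) : ℂ) * ((gE M m' (a l t + n * N) *
          (if n = n ∧ l = l then (((Real.sqrt M)⁻¹ : ℝ) : ℂ) else 0)) *
          (starRingEnd ℂ) (gE M m (a l t + n * N))) =
          ((M : ℂ)⁻¹ * (gE M m' (n * N) * (starRingEnd ℂ) (gE M m (n * N)))) *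
            (gE M t (m' : ℕ) * (starRingEnd ℂ) (gE M t (m : ℕ))) := by
        intro t
        rw [if_pos ⟨rfl, rfl⟩, gE_add, gE_add, gE_mod M m' hM _ _ (ha l t),
          gE_mod M m hM _ _ (ha l t), ← hsq, gE_comm M t, gE_comm M t, map_mul]
        ring
      rw [Finset.sum_congr rfl (fun t _ => e1 t)]
      rw [← Finset.mul_sum, gE_orth M hM]
      by_cases hm : m = m'
      · subst hm
        rw [gE_mul_conj]
        simp [hM0]
      · rw [if_neg, if_neg, mul_zero]
        · simp [hm]
        · intro hd
          apply hm
          have h0 := Int.eq_zero_of_abs_lt_dvd hd (by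
            have := m.2; have := m'.2
            rw [abs_lt]; constructor <;> omega)
          ext; omega
    · have hne : ¬ ((m, n, l) = (m', n', l')) := by
        simp only [Prod.mk.injEq]
        tauto
      rw [if_neg hne]
      simp [h]
  · intro f hf h
    ext j
    by_cases hj : j ∈ S
    · obtain ⟨l, t, n, rfl⟩ := hcov j hj
      have h1 : ∀ m : Fin M, ∑ t : Fin M, f (a l t + n * N) *
          (starRingEnd ℂ) (gE M m (a l t + n * N)) = 0 := by
        intro m
        have := h (m, l, n)
        rw [ip_gvec, inner_gcon, ← Finset.mul_sum] at this
        exact (mul_eq_zero.mp this).resolve_left hsq0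
      have h2 : ∑ m : Fin M, gE M m (a l t + n * N) * ∑ t : Fin M, f (a l t + n * N) *
          (starRingEnd ℂ) (gE M m (a l t + n * N)) = 0 := by
        simp [h1]
      simp_rw [Finset.mul_sum] at h2
      rw [Finset.sum_comm] at h2
      have h3 : ∀ s : Fin M, ∑ m : Fin M, gE M m (a l t + n * N) * (f (a l s + n * N) *
          (starRingEnd ℂ) (gE M m (a l s + n * N))) =
          if s = t then (M : ℂ) * f (a l t + n * N) else 0 := by
        intro s
        have e := gE_orth M hM (a l t + n * N) (a l s + n * N)
        have e' : ∑ m : Fin M, gE M m (a l t + n * N) * (f (a l s + n * N) *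
          (starRingEnd ℂ) (gE M m (a l s + n * N))) = f (a l s + n * N) * 
          ∑ m : Fin M, gE M m (a l t + n * N) * (starRingEnd ℂ) (gE M m (a l s + n * N)) := by
          rw [Finset.mul_sum]
          apply Finset.sum_congr rfl
          intro m _
          ring
        rw [e', e]
        by_cases hst : s = t
        · subst hst
          simp [mul_comm]
        · rw [if_neg hst, if_neg, mul_zero]
          intro hd
          apply hst
          have h5 : (M : ℤ) ∣ ((t : ℕ) : ℤ) - ((s : ℕ) : ℤ) := by
            have h6 := dvd_sub (dvd_add hd (ha l s)) (ha l t)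
            have h7 : a l t + n * (N : ℤ) - (a l s + n * N) + (a l s - (s : ℕ)) - (a l t - (t : ℕ)) = ((t : ℕ) : ℤ) - ((s : ℕ) : ℤ) := by ring
            rw [h7] at h6
            exact h6
          have h0 := Int.eq_zero_of_abs_lt_dvd h5 (by
            have := s.2; have := t.2
            rw [abs_lt]; constructor <;> omega)
          ext; omega
      simp_rw [h3] at h2
      simp only [Finset.sum_ite_eq', Finset.mem_univ, if_true] at h2
      exact (mul_eq_zero.mp h2).resolve_left hM0
    · exact hf j hj

/-- Equivalence: existence of `g` making `𝒢(g,L,M,N)` an orthonormal basis of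
`ℓ²(𝕊)`, existence of `g` making it a Riesz basis of `ℓ²(𝕊)`, and the
condition `card 𝒦_j = qL` for all `j ∈ {0,...,M/q-1}`. -/
theorem stmt19 (M N p q L : ℕ) (hM : 0 < M) (hN : 0 < N) (hp : 0 < p) (hq : 0 < q)
    (hL : 0 < L) (hpq : Nat.Coprime p q) (hMN : q * N = p * M)
    (S : Set ℤ) (hper : ∀ j ∈ S, ∀ n : ℤ, j + n * N ∈ S) :
    ((∃ g : Fin L → lp (fun _ : ℤ => ℂ) 2, (∀ l, ∀ j, j ∉ S → g l j = 0) ∧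
        GaborOrthonormal M N L (fun l i => g l i) ∧
        GaborComplete M N L S (fun l i => g l i)) ↔
      (∀ j : ℤ, 0 ≤ j → j < ((M / q : ℕ) : ℤ) →
        Nat.card {k : Fin p // j + (k : ℕ) * (M : ℤ) ∈ S} = q * L)) ∧
    ((∃ g : Fin L → lp (fun _ : ℤ => ℂ) 2, (∀ l, ∀ j, j ∉ S → g l j = 0) ∧
        (∃ A B : ℝ, 0 < A ∧ A ≤ B ∧
          GaborRieszSeq M N L (fun l i => g l i) A B) ∧
        GaborComplete M N L S (fun l i => g l i)) ↔
      (∀ j : ℤ, 0 ≤ j → j < ((M / q : ℕ) : ℤ) →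
        Nat.card {k : Fin p // j + (k : ℕ) * (M : ℤ) ∈ S} = q * L)) := by
  have h12 : ∀ g : Fin L → lp (fun _ : ℤ => ℂ) 2,
      GaborOrthonormal M N L (fun l i => g l i) →
      ∃ A B : ℝ, 0 < A ∧ A ≤ B ∧ GaborRieszSeq M N L (fun l i => g l i) A B :=
    fun g h => ⟨1, 1, one_pos, le_rfl, riesz_of_orthonormal M N L g h⟩
  refine ⟨⟨?_, ?_⟩, ⟨?_, ?_⟩⟩
  · rintro ⟨g, hg, ho, hc⟩ j _ _
    obtain ⟨A, B, hA, hAB, hR⟩ := h12 g ho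
    exact necessity M N p q L hM hN hp hq hpq hMN S hper g hg A B hA hAB hR hc j
  · exact sufficiency M N p q L hM hN hp hq hpq hMN S hper
  · rintro ⟨g, hg, ⟨A, B, hA, hAB, hR⟩, hc⟩ j _ _
    exact necessity M N p q L hM hN hp hq hpq hMN S hper g hg A B hA hAB hR hc j
  · intro h
    obtain ⟨g, hg, ho, hc⟩ := sufficiency M N p q L hM hN hp hq hpq hMN S hper h
    exact ⟨g, hg, h12 g ho, hc⟩
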